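/- For every ε > 0 there exists C_ε > 0 with the following property. For all dyadic N, N₁, N₂, N₃ ≥ 1, all m ∈ ℤ, and every fixed n₁ ∈ ℤ², the number of triples (n, n₂, n₃) with (n, n₁, n₂, n₃) ∈ S^{𝐍,(m)} is at most C_ε · min( N₃² (min(N, N₂))^ε, (N N₂)^{1+ε}, (N N₃)^{1+ε}, (N₂ N₃)^{1+ε} ), uniformly in n₁ and m. -/

import Mathlib

/-- Euclidean norm of a lattice point in `ℤ²`. -/
noncomputable def znorm (n : ℤ × ℤ) : ℝ := Real.sqrt ((n.1 : ℝ) ^ 2 + (n.2 : ℝ) ^ 2)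

/-- Squared Euclidean norm `|n|²` of `n ∈ ℤ²`, as an integer. -/
def nsq (n : ℤ × ℤ) : ℤ := n.1 ^ 2 + n.2 ^ 2

/-- `φ(n̄) = |n|² − |n₁|² + |n₂|² − |n₃|²`. -/
def phiFn (n n₁ n₂ n₃ : ℤ × ℤ) : ℤ := nsq n - nsq n₁ + nsq n₂ - nsq n₃

/-- `N` is a dyadic number: `N = 2^k` for some integer `k ≥ 0`. -/
def IsDyadic (N : ℝ) : Prop := ∃ k : ℕ, N = 2 ^ k

/-- `|n| ∼ N`: for dyadic `N ≥ 2` this means `N/2 < |n| ≤ N`; for `N = 1` it means `|n| ≤ 1`. -/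
def simDyadic (N : ℝ) (n : ℤ × ℤ) : Prop :=
  (N = 1 ∧ znorm n ≤ 1) ∨ (N ≠ 1 ∧ N / 2 < znorm n ∧ znorm n ≤ N)

/-- Membership in the set `S^{𝐍,(m)}`. -/
def SMem (N N₁ N₂ N₃ : ℝ) (m : ℤ) (n n₁ n₂ n₃ : ℤ × ℤ) : Prop :=
  n = n₁ - n₂ + n₃ ∧ n ≠ n₁ ∧ n ≠ n₃ ∧ phiFn n n₁ n₂ n₃ = m ∧
    simDyadic N n ∧ simDyadic N₁ n₁ ∧ simDyadic N₂ n₂ ∧ simDyadic N₃ n₃ 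

/-!
With `u = n - n₁` and `v = n - n₃` the phase is `φ = 2 u · v = (|u + v|² - |u - v|²) / 2`, where
`u - v = n₃ - n₁`. Hence once `n₃` is fixed along with `n₁`, `u + v` lies on a circle `|p|² = K`.
Counting the pairs `u`, `v` in two squares with `u · v` prescribed reduces, after fixing their first
(or second) coordinates, to a hyperbola `x y = K` with `K ≠ 0`, except when `u` and `v` lie on
different coordinate axes.

Circles and hyperbolas carry few lattice points in a box of size `A`, uniformly in the centre of the
box and in `K`. The area of a triangle inscribed in such a curve satisfies a product formula, by
which `K` divides a nonzero integer that is polynomial in the differences of the vertices. So if the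
box contains three points of the curve then `K` is polynomially bounded in `A`, and the divisor
bound `d(K) ≲ K^ε` in `ℤ` or in `ℤ[i]` applies; it holds in any factorial monoid with a
multiplicative norm that takes each value finitely often.

All the bounds in which `n₂` replaces `n` follow from the symmetry `n ↔ n₂`.
-/

open Finset Real

section DivisorBound

open UniqueFactorizationMonoid

lemma natCast_add_one_le_mul_pow {δ y : ℝ} (hδ : 0 < δ) (hy : 1 + δ ≤ y) (k : ℕ) :
    (k : ℝ) + 1 ≤ (1 + 1 / δ) * y ^ k := by
  have bernoulli : 1 + k * δ ≤ y ^ k :=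
    (one_add_mul_le_pow (by linarith) k).trans (pow_le_pow_left₀ (by linarith) hy k)
  calc (k : ℝ) + 1 ≤ (k + 1) + (k * δ + 1 / δ) := le_add_of_nonneg_right (by positivity)
    _ = (1 + 1 / δ) * (1 + k * δ) := by field_simp; ring
    _ ≤ (1 + 1 / δ) * y ^ k := by gcongr

lemma natCast_add_one_le_pow {y : ℝ} (hy : 2 ≤ y) (k : ℕ) : (k : ℝ) + 1 ≤ y ^ k :=
  calc (k : ℝ) + 1 ≤ 2 ^ k := mod_cast (Nat.lt_two_pow_self : k < 2 ^ k)
    _ ≤ y ^ k := by gcongr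

lemma prod_add_one_le_pow_mul_prod_pow {ι : Type*} {δ : ℝ} (hδ : 0 < δ) (P : Finset ι)
    (y : ι → ℝ) (e : ι → ℕ) (hy : ∀ p ∈ P, 1 + δ ≤ y p) :
    ∏ p ∈ P, ((e p : ℝ) + 1) ≤ (1 + 1 / δ) ^ #{p ∈ P | y p < 2} * ∏ p ∈ P, y p ^ e p :=
  calc ∏ p ∈ P, ((e p : ℝ) + 1)
      ≤ ∏ p ∈ P, ((if y p < 2 then 1 + 1 / δ else 1) * y p ^ e p) := by
        refine prod_le_prod (fun p _ ↦ by positivity) fun p hp ↦ ?_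
        split_ifs with hsmall
        · exact natCast_add_one_le_mul_pow hδ (hy p hp) (e p)
        · rw [one_mul]
          exact natCast_add_one_le_pow (not_lt.mp hsmall) (e p)
    _ = (1 + 1 / δ) ^ #{p ∈ P | y p < 2} * ∏ p ∈ P, y p ^ e p := by
        rw [prod_mul_distrib, prod_ite, prod_const, prod_const_one, mul_one]

variable {R : Type*} [CommMonoidWithZero R]

lemma map_eq_one_of_isUnit (N : R →* ℕ) {u : R} (hu : IsUnit u) : N u = 1 :=
  Nat.isUnit_iff.mp (hu.map N)

-- Otherwise the powers of `z`, which are distinct, would all have norm at most one.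
lemma two_le_map_of_not_isUnit [IsCancelMulZero R] (N : R →* ℕ) [Northcott N] {z : R} (hz : z ≠ 0)
    (hu : ¬IsUnit z) : 2 ≤ N z := by
  by_contra! hlt
  refine Set.infinite_range_of_injective (pow_injective_of_not_isUnit hu hz)
    ((Northcott.finite_le (h := N) 1).subset ?_)
  rintro _ ⟨k, rfl⟩
  exact (map_pow N z k).trans_le (pow_le_one₀ (Nat.zero_le _) (Nat.le_of_lt_succ hlt))

lemma finite_units_of_northcott (N : R →* ℕ) [Northcott N] : Finite Rˣ :=
  Set.finite_coe_iff.mpr (Northcott.finite_le (h := N) 1) |>.of_injective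
    (fun u : Rˣ ↦ (⟨u, (map_eq_one_of_isUnit N u.isUnit).le⟩ : {w : R | N w ≤ 1}))
    fun _ _ huv ↦ Units.ext (congrArg Subtype.val huv)

variable [UniqueFactorizationMonoid R]

lemma card_le_of_forall_dvd [NormalizationMonoid R] [DecidableEq R] [Finite Rˣ] {z : R}
    (hz : z ≠ 0) {S : Finset R} (hS : ∀ w ∈ S, w ∣ z) :
    #S ≤ Nat.card Rˣ *
      ∏ p ∈ (normalizedFactors z).toFinset, ((normalizedFactors z).count p + 1) := by
  have := Fintype.ofFinite Rˣ
  have hsub : S ⊆ ((univ : Finset Rˣ) ×ˢ Finset.Iic (normalizedFactors z)).image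
      fun p ↦ p.2.prod * p.1 := by
    intro w hw
    have hw₀ : w ≠ 0 := ne_zero_of_dvd_ne_zero hz (hS w hw)
    obtain ⟨u, hu⟩ := prod_normalizedFactors hw₀
    refine mem_image.mpr ⟨(u, normalizedFactors w), mem_product.mpr ⟨mem_univ u, ?_⟩, hu⟩
    exact Finset.mem_Iic.mpr
      ((dvd_iff_normalizedFactors_le_normalizedFactors hw₀ hz).mp (hS w hw))
  calc #S ≤ #((univ : Finset Rˣ) ×ˢ Finset.Iic (normalizedFactors z)) :=
        (card_le_card hsub).trans card_image_le
    _ = _ := by rw [card_product, card_univ, Nat.card_eq_fintype_card, Multiset.card_Iic]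

lemma map_rpow_eq_prod_normalizedFactors [NormalizationMonoid R] [DecidableEq R] (N : R →* ℕ)
    {z : R} (hz : z ≠ 0) (ε : ℝ) :
    (N z : ℝ) ^ ε =
      ∏ p ∈ (normalizedFactors z).toFinset, ((N p : ℝ) ^ ε) ^ (normalizedFactors z).count p := by
  obtain ⟨u, hu⟩ := prod_normalizedFactors hz
  have map_eq : N z =
      ∏ p ∈ (normalizedFactors z).toFinset, N p ^ (normalizedFactors z).count p :=
    calc N z = N (normalizedFactors z).prod := by
          rw [← congrArg N hu, map_mul, map_eq_one_of_isUnit N u.isUnit, mul_one]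
      _ = _ := by simp only [prod_multiset_count, map_prod, map_pow]
  rw [map_eq, Nat.cast_prod, ← finsetProd_rpow _ _ fun _ _ ↦ Nat.cast_nonneg _]
  refine prod_congr rfl fun p _ ↦ ?_
  rw [Nat.cast_pow, ← rpow_natCast_mul (Nat.cast_nonneg _), mul_comm,
    rpow_mul_natCast (Nat.cast_nonneg _)]

theorem exists_card_dvd_le_rpow (N : R →* ℕ) [Northcott N] {ε : ℝ} (hε : 0 < ε) :
    ∃ C : ℝ, 0 < C ∧ ∀ z : R, z ≠ 0 → ∀ S : Finset R, (∀ w ∈ S, w ∣ z) →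
      (#S : ℝ) ≤ C * (N z : ℝ) ^ ε := by
  classical
  let _ : StrongNormalizationMonoid R := UniqueFactorizationMonoid.strongNormalizationMonoid
  have := finite_units_of_northcott N
  have units_pos : 0 < Nat.card Rˣ := Nat.card_pos
  set δ : ℝ := 2 ^ ε - 1
  have hδ : 0 < δ := sub_pos.mpr (one_lt_rpow one_lt_two hε)
  set small : Finset R := (Northcott.finite_le (h := N) ⌊(2 : ℝ) ^ ε⁻¹⌋₊).toFinset
  refine ⟨Nat.card Rˣ * (1 + 1 / δ) ^ #small, by positivity, fun z hz S hS ↦ ?_⟩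
  set P := (normalizedFactors z).toFinset
  set e := fun p ↦ (normalizedFactors z).count p
  have norm_ge : ∀ p ∈ P, 1 + δ ≤ (N p : ℝ) ^ ε := fun p hp ↦ by
    have hprime : Prime p := prime_of_normalized_factor p (Multiset.mem_toFinset.mp hp)
    have : (2 : ℝ) ≤ N p := mod_cast two_le_map_of_not_isUnit N hprime.ne_zero hprime.not_isUnit
    rw [add_sub_cancel]
    gcongr
  have small_of_lt : {p ∈ P | (N p : ℝ) ^ ε < 2} ⊆ small := fun p hp ↦ by
    have : (N p : ℝ) ≤ 2 ^ ε⁻¹ :=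
      (le_rpow_inv_iff_of_pos (by positivity) two_pos.le hε).mpr (mem_filter.mp hp).2.le
    exact (Set.Finite.mem_toFinset _).mpr (Nat.le_floor this)
  calc (#S : ℝ) ≤ Nat.card Rˣ * ∏ p ∈ P, ((e p : ℝ) + 1) := mod_cast card_le_of_forall_dvd hz hS
    _ ≤ Nat.card Rˣ * ((1 + 1 / δ) ^ #{p ∈ P | (N p : ℝ) ^ ε < 2} *
          ∏ p ∈ P, ((N p : ℝ) ^ ε) ^ e p) := by
        gcongr
        exact prod_add_one_le_pow_mul_prod_pow hδ P _ e norm_ge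
    _ ≤ Nat.card Rˣ * ((1 + 1 / δ) ^ #small * (N z : ℝ) ^ ε) := by
        rw [map_rpow_eq_prod_normalizedFactors N hz]
        gcongr
        exact le_add_of_nonneg_right (by positivity)
    _ = _ := (mul_assoc _ _ _).symm

end DivisorBound

section LatticeBoxes

/-- The integers at distance at most the real radius `A` from `c`. -/
noncomputable def intBall (c : ℤ) (A : ℝ) : Finset ℤ := Finset.Icc ⌈c - A⌉ ⌊c + A⌋

/-- The lattice points at sup-norm distance at most the real radius `A` from `c`. -/
noncomputable def latticeSquare (c : ℤ × ℤ) (A : ℝ) : Finset (ℤ × ℤ) :=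
  intBall c.1 A ×ˢ intBall c.2 A

lemma mem_intBall {c x : ℤ} {A : ℝ} : x ∈ intBall c A ↔ |(x - c : ℝ)| ≤ A := by
  rw [intBall, Finset.mem_Icc, Int.ceil_le, Int.le_floor, abs_le, neg_le_sub_iff_le_add,
    sub_le_iff_le_add, sub_le_iff_le_add']

lemma mem_latticeSquare {c p : ℤ × ℤ} {A : ℝ} :
    p ∈ latticeSquare c A ↔ |(p.1 - c.1 : ℝ)| ≤ A ∧ |(p.2 - c.2 : ℝ)| ≤ A := by
  rw [latticeSquare, mem_product, mem_intBall, mem_intBall]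

lemma card_intBall_le (c : ℤ) {A : ℝ} (hA : 1 ≤ A) : (#(intBall c A) : ℝ) ≤ 3 * A := by
  have hceil_le : ⌈c - A⌉ ≤ ⌊c + A⌋ + 1 :=
    (Int.ceil_le.mpr (by linarith : (c - A : ℝ) ≤ c)).trans
      ((Int.le_floor.mpr (by linarith : (c : ℝ) ≤ c + A)).trans (by omega))
  have hcard : (#(intBall c A) : ℤ) = ⌊c + A⌋ + 1 - ⌈c - A⌉ :=
    Int.card_Icc_of_le _ _ hceil_le
  calc (#(intBall c A) : ℝ) = ⌊c + A⌋ + 1 - ⌈c - A⌉ := mod_cast hcard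
    _ ≤ 3 * A := by linarith [Int.floor_le (c + A), Int.le_ceil (c - A)]

lemma card_intBall_product_le (c c' : ℤ) {A B : ℝ} (hA : 1 ≤ A) (hB : 1 ≤ B) :
    (#(intBall c A ×ˢ intBall c' B) : ℝ) ≤ 9 * (A * B) := by
  rw [card_product, Nat.cast_mul]
  calc (#(intBall c A) : ℝ) * #(intBall c' B) ≤ 3 * A * (3 * B) := by
        gcongr <;> exact card_intBall_le _ ‹_›
    _ = 9 * (A * B) := by ring

lemma abs_sub_le_of_mem_intBall {c x y : ℤ} {A : ℝ} (hx : x ∈ intBall c A)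
    (hy : y ∈ intBall c A) : |(x - y : ℝ)| ≤ 2 * A := by
  rw [mem_intBall] at hx hy
  linarith [abs_sub_le (x : ℝ) c y, abs_sub_comm (y : ℝ) c]

lemma abs_prod_sub_le_of_mem_intBall {c x y z : ℤ} {A : ℝ} (hx : x ∈ intBall c A)
    (hy : y ∈ intBall c A) (hz : z ∈ intBall c A) :
    |((x - y) * (x - z) * (y - z) : ℝ)| ≤ (2 * A) ^ 3 := by
  have hxy := abs_sub_le_of_mem_intBall hx hy
  have := (abs_nonneg _).trans hxy
  rw [abs_mul, abs_mul, pow_three']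
  gcongr
  exacts [abs_sub_le_of_mem_intBall hx hz, abs_sub_le_of_mem_intBall hy hz]

lemma add_mem_latticeSquare {c c' p q : ℤ × ℤ} {A B : ℝ} (hp : p ∈ latticeSquare c A)
    (hq : q ∈ latticeSquare c' B) : p + q ∈ latticeSquare (c + c') (A + B) := by
  rw [mem_latticeSquare] at *
  simp only [Prod.fst_add, Prod.snd_add, Int.cast_add, add_sub_add_comm]
  exact ⟨(abs_add_le _ _).trans (add_le_add hp.1 hq.1),
    (abs_add_le _ _).trans (add_le_add hp.2 hq.2)⟩

lemma neg_mem_latticeSquare {c p : ℤ × ℤ} {A : ℝ} (hp : p ∈ latticeSquare c A) :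
    -p ∈ latticeSquare (-c) A := by
  simpa [mem_latticeSquare, neg_add_eq_sub, abs_sub_comm] using hp

lemma sub_mem_latticeSquare {c c' p q : ℤ × ℤ} {A B : ℝ} (hp : p ∈ latticeSquare c A)
    (hq : q ∈ latticeSquare c' B) : p - q ∈ latticeSquare (c - c') (A + B) := by
  rw [sub_eq_add_neg, sub_eq_add_neg]
  exact add_mem_latticeSquare hp (neg_mem_latticeSquare hq)

lemma sub_const_mem_latticeSquare {c p : ℤ × ℤ} {A : ℝ} (a : ℤ × ℤ) (hp : p ∈ latticeSquare c A) :
    p - a ∈ latticeSquare (c - a) A := by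
  simpa [mem_latticeSquare] using hp

lemma const_sub_mem_latticeSquare {c p : ℤ × ℤ} {A : ℝ} (a : ℤ × ℤ) (hp : p ∈ latticeSquare c A) :
    a - p ∈ latticeSquare (a - c) A := by
  simpa [mem_latticeSquare, abs_sub_comm] using hp

lemma card_le_card_mul_of_forall_fiber_le {α β : Type*} [DecidableEq β] {S : Finset α}
    {T : Finset β} {f : α → β} {r : ℝ} (hf : ∀ a ∈ S, f a ∈ T)
    (hr : ∀ b ∈ T, (#{a ∈ S | f a = b} : ℝ) ≤ r) : (#S : ℝ) ≤ #T * r := by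
  rw [card_eq_sum_card_fiberwise hf, Nat.cast_sum, ← nsmul_eq_mul]
  exact sum_le_card_nsmul T _ r hr

end LatticeBoxes

lemma le_add_two_mul_rpow {n C X κ ε : ℝ} {k : ℕ} (hε : 0 ≤ ε) (hk : k ≠ 0) (hC : 0 ≤ C)
    (hX : 1 ≤ X) (hκ : 0 ≤ κ) (h : n ≤ 2 ∨ κ ≤ X ^ k ∧ n ≤ C * κ ^ (ε / k)) :
    n ≤ (C + 2) * X ^ ε := by
  have one_le : 1 ≤ X ^ ε := one_le_rpow hX hε
  rcases h with h | ⟨hκX, h⟩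
  · nlinarith
  · have : κ ^ (ε / k) ≤ X ^ ε :=
      calc κ ^ (ε / k) ≤ (X ^ k) ^ (ε / k) := by gcongr
        _ = X ^ ε := by
          rw [← rpow_natCast_mul (by positivity), mul_div_cancel₀ _ (Nat.cast_ne_zero.mpr hk)]
    nlinarith

section Hyperbola

-- The cofactor is minus the squared determinant of two edge vectors of the triangle.
lemma dvd_prod_sub_of_mul_eq {R : Type*} [CommRing R] {K x₁ x₂ x₃ y₁ y₂ y₃ : R}
    (h₁ : x₁ * y₁ = K) (h₂ : x₂ * y₂ = K) (h₃ : x₃ * y₃ = K) :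
    K ∣ (x₁ - x₂) * (x₁ - x₃) * (x₂ - x₃) * ((y₁ - y₂) * (y₁ - y₃) * (y₂ - y₃)) := by
  refine ⟨-((x₁ - x₂) * (y₁ - y₃) - (x₁ - x₃) * (y₁ - y₂)) ^ 2, ?_⟩
  grind

lemma ne_and_ne_of_mul_eq {R : Type*} [MulZeroClass R] [IsCancelMulZero R] {K : R} (hK : K ≠ 0)
    {p q : R × R} (hp : p.1 * p.2 = K) (hq : q.1 * q.2 = K) (hpq : p ≠ q) :
    p.1 ≠ q.1 ∧ p.2 ≠ q.2 := by
  have hne := mul_ne_zero_iff.mp (hp.trans_ne hK)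
  refine ⟨fun h ↦ hpq (Prod.ext h ?_), fun h ↦ hpq (Prod.ext ?_ h)⟩
  · exact mul_left_cancel₀ hne.1 (by rw [hp, h, hq])
  · exact mul_right_cancel₀ hne.2 (by rw [hp, h, hq])

lemma abs_le_abs_of_dvd {a b : ℤ} (hab : a ∣ b) (hb : b ≠ 0) : |a| ≤ |b| :=
  Int.le_of_dvd (abs_pos.mpr hb) ((abs_dvd_abs a b).mpr hab)

lemma abs_le_of_two_lt_card_hyperbola {K c c' : ℤ} (hK : K ≠ 0) {A B : ℝ}
    (hcard : 2 < #{p ∈ intBall c A ×ˢ intBall c' B | p.1 * p.2 = K}) :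
    |(K : ℝ)| ≤ (4 * (A * B)) ^ 3 := by
  obtain ⟨p, q, r, hp, hq, hr, hpq, hpr, hqr⟩ := two_lt_card_iff.mp hcard
  simp only [mem_filter, mem_product] at hp hq hr
  obtain ⟨⟨hp₁, hp₂⟩, hpK⟩ := hp
  obtain ⟨⟨hq₁, hq₂⟩, hqK⟩ := hq
  obtain ⟨⟨hr₁, hr₂⟩, hrK⟩ := hr
  have ne_pq := ne_and_ne_of_mul_eq hK hpK hqK hpq
  have ne_pr := ne_and_ne_of_mul_eq hK hpK hrK hpr
  have ne_qr := ne_and_ne_of_mul_eq hK hqK hrK hqr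
  have prod_ne_zero : (p.1 - q.1) * (p.1 - r.1) * (q.1 - r.1) *
      ((p.2 - q.2) * (p.2 - r.2) * (q.2 - r.2)) ≠ 0 := by
    simp only [ne_eq, mul_eq_zero, sub_eq_zero, ne_pq, ne_pr, ne_qr, or_self, not_false_eq_true]
  calc |(K : ℝ)| ≤ |((p.1 - q.1) * (p.1 - r.1) * (q.1 - r.1) : ℝ) *
        ((p.2 - q.2) * (p.2 - r.2) * (q.2 - r.2))| :=
        mod_cast abs_le_abs_of_dvd (dvd_prod_sub_of_mul_eq hpK hqK hrK) prod_ne_zero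
    _ ≤ (2 * A) ^ 3 * (2 * B) ^ 3 := by
        rw [abs_mul]
        have hA := abs_prod_sub_le_of_mem_intBall hp₁ hq₁ hr₁
        have hB := abs_prod_sub_le_of_mem_intBall hp₂ hq₂ hr₂
        exact mul_le_mul hA hB (abs_nonneg _) ((abs_nonneg _).trans hA)
    _ = (4 * (A * B)) ^ 3 := by ring

instance : Northcott (Int.natAbsHom : ℤ →* ℕ) where
  finite_le b := (Set.finite_Icc (-b : ℤ) b).subset fun x (hx : x.natAbs ≤ b) ↦ by
    rw [Set.mem_Icc]
    omega

theorem exists_card_hyperbola_le_rpow {ε : ℝ} (hε : 0 < ε) :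
    ∃ C : ℝ, 0 < C ∧ ∀ A B : ℝ, 1 ≤ A → 1 ≤ B → ∀ c c' K : ℤ, K ≠ 0 →
      (#{p ∈ intBall c A ×ˢ intBall c' B | p.1 * p.2 = K} : ℝ) ≤ C * (A * B) ^ ε := by
  obtain ⟨C, hC, card_dvd_le⟩ :=
    exists_card_dvd_le_rpow (Int.natAbsHom : ℤ →* ℕ) (div_pos hε three_pos)
  refine ⟨(C + 2) * 4 ^ ε, by positivity, fun A B hA hB c c' K hK ↦ ?_⟩
  set S : Finset (ℤ × ℤ) := {p ∈ intBall c A ×ˢ intBall c' B | p.1 * p.2 = K}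
  have one_le_AB : 1 ≤ A * B := one_le_mul_of_one_le_of_one_le hA hB
  have mul_eq : ∀ p ∈ S, p.1 * p.2 = K := fun p hp ↦ (mem_filter.mp hp).2
  have card_le : (#S : ℝ) ≤ C * |(K : ℝ)| ^ (ε / 3) := by
    have fst_injOn : Set.InjOn Prod.fst (S : Set (ℤ × ℤ)) := fun p hp q hq hpq ↦ by
      by_contra hne
      exact (ne_and_ne_of_mul_eq hK (mul_eq p hp) (mul_eq q hq) hne).1 hpq
    rw [← card_image_of_injOn fst_injOn, ← Int.cast_abs, ← Nat.cast_natAbs]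
    exact card_dvd_le K hK _ (forall_mem_image.mpr fun p hp ↦ Dvd.intro _ (mul_eq p hp))
  have : (#S : ℝ) ≤ (C + 2) * (4 * (A * B)) ^ ε := by
    refine le_add_two_mul_rpow (k := 3) hε.le three_ne_zero hC.le (by linarith) (abs_nonneg (K : ℝ))
      ((le_or_gt #S 2).imp (fun h ↦ mod_cast h) fun h ↦ ⟨?_, card_le⟩)
    exact abs_le_of_two_lt_card_hyperbola hK h
  rwa [mul_rpow (by norm_num) (by positivity), ← mul_assoc] at this

end Hyperbola

section Circle

-- This is `abc = 4RΔ` for a triangle of side lengths `a`, `b`, `c` and area `Δ` inscribed in a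
-- circle of radius `R`.
lemma dvd_prod_nsq_sub_of_nsq_eq {K : ℤ} {p q r : ℤ × ℤ} (hp : nsq p = K) (hq : nsq q = K)
    (hr : nsq r = K) : K ∣ nsq (p - q) * nsq (p - r) * nsq (q - r) := by
  refine ⟨4 * ((p.1 - q.1) * (p.2 - r.2) - (p.1 - r.1) * (p.2 - q.2)) ^ 2, ?_⟩
  simp only [nsq, Prod.fst_sub, Prod.snd_sub] at *
  grind

lemma nsq_eq_zero {p : ℤ × ℤ} : nsq p = 0 ↔ p = 0 := by
  rw [nsq, add_eq_zero_iff_of_nonneg (sq_nonneg _) (sq_nonneg _), sq_eq_zero_iff, sq_eq_zero_iff,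
    Prod.ext_iff]
  rfl

lemma abs_nsq_sub_le_of_mem_latticeSquare {c p q : ℤ × ℤ} {A : ℝ} (hp : p ∈ latticeSquare c A)
    (hq : q ∈ latticeSquare c A) : |(nsq (p - q) : ℝ)| ≤ (3 * A) ^ 2 := by
  rw [latticeSquare, mem_product] at hp hq
  have h₁ := pow_le_pow_left₀ (abs_nonneg _) (abs_sub_le_of_mem_intBall hp.1 hq.1) 2
  have h₂ := pow_le_pow_left₀ (abs_nonneg _) (abs_sub_le_of_mem_intBall hp.2 hq.2) 2
  have nsq_eq : (nsq (p - q) : ℝ) = |(p.1 - q.1 : ℝ)| ^ 2 + |(p.2 - q.2 : ℝ)| ^ 2 := by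
    simp [nsq]
  calc |(nsq (p - q) : ℝ)| = |(p.1 - q.1 : ℝ)| ^ 2 + |(p.2 - q.2 : ℝ)| ^ 2 := by
        rw [nsq_eq, abs_of_nonneg (by positivity)]
    _ ≤ (2 * A) ^ 2 + (2 * A) ^ 2 := add_le_add h₁ h₂
    _ ≤ (3 * A) ^ 2 := by nlinarith [sq_nonneg A]

lemma ne_zero_and_abs_le_of_two_lt_card_circle {K : ℤ} {c : ℤ × ℤ} {A : ℝ}
    (hcard : 2 < #{p ∈ latticeSquare c A | nsq p = K}) : K ≠ 0 ∧ |(K : ℝ)| ≤ (3 * A) ^ 6 := by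
  obtain ⟨p, q, r, hp, hq, hr, hpq, hpr, hqr⟩ := two_lt_card_iff.mp hcard
  simp only [mem_filter] at hp hq hr
  have hdvd := dvd_prod_nsq_sub_of_nsq_eq hp.2 hq.2 hr.2
  have hne : nsq (p - q) * nsq (p - r) * nsq (q - r) ≠ 0 := by
    simp only [ne_eq, mul_eq_zero, nsq_eq_zero, sub_eq_zero, hpq, hpr, hqr, or_self,
      not_false_eq_true]
  refine ⟨ne_zero_of_dvd_ne_zero hne hdvd, ?_⟩
  calc |(K : ℝ)| ≤ |(nsq (p - q) * nsq (p - r) * nsq (q - r) : ℝ)| :=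
        mod_cast abs_le_abs_of_dvd hdvd hne
    _ ≤ (3 * A) ^ 2 * (3 * A) ^ 2 * (3 * A) ^ 2 := by
        rw [abs_mul, abs_mul]
        gcongr
        exacts [abs_nsq_sub_le_of_mem_latticeSquare hp.1 hq.1,
          abs_nsq_sub_le_of_mem_latticeSquare hp.1 hr.1,
          abs_nsq_sub_le_of_mem_latticeSquare hq.1 hr.1]
    _ = (3 * A) ^ 6 := by ring

/-- The norm `|z|²` of a Gaussian integer, as a monoid homomorphism to `ℕ`. -/
def gaussNorm : GaussianInt →* ℕ := (Int.natAbsHom : ℤ →* ℕ).comp Zsqrtd.normMonoidHom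

lemma natCast_gaussNorm (z : GaussianInt) : (gaussNorm z : ℤ) = z.re ^ 2 + z.im ^ 2 :=
  calc (gaussNorm z : ℤ) = z.norm := GaussianInt.natCast_natAbs_norm z
    _ = z.re ^ 2 + z.im ^ 2 := by rw [Zsqrtd.norm_def]; ring

lemma gaussNorm_intCast (k : ℤ) : (gaussNorm k : ℝ) = |(k : ℝ)| ^ 2 := by
  have : (gaussNorm k : ℤ) = k ^ 2 := by simp [natCast_gaussNorm]
  rw [sq_abs]
  exact_mod_cast this

instance : Northcott gaussNorm where
  finite_le b := by
    refine Set.Finite.of_injOn (f := fun z ↦ (z.re, z.im)) (t := Set.Icc (-b, -b) (b, b))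
      (fun z (hz : gaussNorm z ≤ b) ↦ ?_) (fun z _ w _ hzw ↦ ?_) (Set.finite_Icc _ _)
    · have hzb : z.re ^ 2 + z.im ^ 2 ≤ b := (natCast_gaussNorm z).symm.trans_le (mod_cast hz)
      refine ⟨⟨?_, ?_⟩, ?_, ?_⟩ <;> dsimp only <;> nlinarith
    · exact Zsqrtd.ext (congrArg Prod.fst hzw) (congrArg Prod.snd hzw)

lemma dvd_nsq (p : ℤ × ℤ) : (⟨p.1, p.2⟩ : GaussianInt) ∣ (nsq p : GaussianInt) := by
  have norm_eq : (⟨p.1, p.2⟩ : GaussianInt).norm = nsq p := by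
    rw [Zsqrtd.norm_def, nsq]
    ring
  rw [← norm_eq, Zsqrtd.norm_eq_mul_conj]
  exact dvd_mul_right _ _

theorem exists_card_circle_le_rpow {ε : ℝ} (hε : 0 < ε) :
    ∃ C : ℝ, 0 < C ∧ ∀ A : ℝ, 1 ≤ A → ∀ (c : ℤ × ℤ) (K : ℤ),
      (#{p ∈ latticeSquare c A | nsq p = K} : ℝ) ≤ C * A ^ ε := by
  obtain ⟨C, hC, card_dvd_le⟩ :=
    exists_card_dvd_le_rpow gaussNorm (div_pos hε (by norm_num : (0 : ℝ) < 12))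
  refine ⟨(C + 2) * 3 ^ ε, by positivity, fun A hA c K ↦ ?_⟩
  set S : Finset (ℤ × ℤ) := {p ∈ latticeSquare c A | nsq p = K}
  have card_le (hK : K ≠ 0) : (#S : ℝ) ≤ C * (gaussNorm K : ℝ) ^ (ε / 12) := by
    have toGauss_inj : Function.Injective fun p : ℤ × ℤ ↦ (⟨p.1, p.2⟩ : GaussianInt) :=
      fun p q hpq ↦ Prod.ext (congrArg Zsqrtd.re hpq) (congrArg Zsqrtd.im hpq)
    rw [← card_image_of_injective S toGauss_inj]
    refine card_dvd_le K (Int.cast_ne_zero.mpr hK) _ (forall_mem_image.mpr fun p hp ↦ ?_)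
    rw [← (mem_filter.mp hp).2]
    exact dvd_nsq p
  have : (#S : ℝ) ≤ (C + 2) * (3 * A) ^ ε := by
    refine le_add_two_mul_rpow (k := 12) hε.le (by norm_num) hC.le (by linarith)
      (Nat.cast_nonneg (gaussNorm K)) ((le_or_gt #S 2).imp (fun h ↦ mod_cast h) fun h ↦ ?_)
    obtain ⟨hK, abs_le⟩ := ne_zero_and_abs_le_of_two_lt_card_circle h
    refine ⟨?_, card_le hK⟩
    calc (gaussNorm K : ℝ) = |(K : ℝ)| ^ 2 := gaussNorm_intCast K
      _ ≤ ((3 * A) ^ 6) ^ 2 := by gcongr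
      _ = (3 * A) ^ 12 := (pow_mul _ 6 2).symm
  rwa [mul_rpow (by norm_num) (by positivity), ← mul_assoc] at this

end Circle

section Bilinear

/-- The Euclidean scalar product on `ℤ²`; on the quadruples with `n = n₁ - n₂ + n₃` the phase `φ` is
`2 (n - n₁) · (n - n₃)`. -/
def dot (p q : ℤ × ℤ) : ℤ := p.1 * q.1 + p.2 * q.2

lemma card_dot_slice_le_card_hyperbola (c c' b : ℤ × ℤ) (A B : ℝ) (M : ℤ) :
    #{q ∈ latticeSquare c A ×ˢ latticeSquare c' B | dot q.1 q.2 = M ∧ (q.1.1, q.2.1) = b} ≤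
      #{p ∈ intBall c.2 A ×ˢ intBall c'.2 B | p.1 * p.2 = M - b.1 * b.2} := by
  refine card_le_card_of_injOn (fun q ↦ (q.1.2, q.2.2)) ?_ ?_
  · rintro q hq
    simp only [coe_filter, Set.mem_ofPred_eq, mem_product, latticeSquare] at hq ⊢
    obtain ⟨⟨⟨-, hy⟩, -, hw⟩, hdot, rfl⟩ := hq
    exact ⟨⟨hy, hw⟩, eq_sub_of_add_eq' hdot⟩
  · intro q hq q' hq' hqq'
    have fst_eq := (mem_filter.mp hq).2.2.trans (mem_filter.mp hq').2.2.symm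
    simp only [Prod.mk.injEq] at fst_eq hqq'
    exact Prod.ext (Prod.ext fst_eq.1 hqq'.1) (Prod.ext fst_eq.2 hqq'.2)

lemma exists_card_dot_snd_mul_ne_zero_le {ε : ℝ} (hε : 0 < ε) :
    ∃ C : ℝ, 0 < C ∧ ∀ A B : ℝ, 1 ≤ A → 1 ≤ B → ∀ (c c' : ℤ × ℤ) (M : ℤ),
      (#{q ∈ latticeSquare c A ×ˢ latticeSquare c' B |
        dot q.1 q.2 = M ∧ q.1.2 * q.2.2 ≠ 0} : ℝ) ≤ C * (A * B) ^ (1 + ε) := by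
  obtain ⟨C, hC, card_hyperbola_le⟩ := exists_card_hyperbola_le_rpow hε
  refine ⟨9 * C, by positivity, fun A B hA hB c c' M ↦ ?_⟩
  set box := latticeSquare c A ×ˢ latticeSquare c' B
  set S := {q ∈ box | dot q.1 q.2 = M ∧ q.1.2 * q.2.2 ≠ 0}
  have fst_mem : ∀ q ∈ S, (q.1.1, q.2.1) ∈ intBall c.1 A ×ˢ intBall c'.1 B := fun q hq ↦ by
    have hq_box := mem_product.mp (mem_filter.mp hq).1
    exact mem_product.mpr ⟨(mem_product.mp hq_box.1).1, (mem_product.mp hq_box.2).1⟩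
  have slice_le (b : ℤ × ℤ) : (#{q ∈ S | (q.1.1, q.2.1) = b} : ℝ) ≤ C * (A * B) ^ ε := by
    rcases eq_empty_or_nonempty {q ∈ S | (q.1.1, q.2.1) = b} with hempty | ⟨q, hq⟩
    · rw [hempty, card_empty, Nat.cast_zero]
      positivity
    have hK : M - b.1 * b.2 ≠ 0 := by
      obtain ⟨hqS, rfl⟩ := mem_filter.mp hq
      obtain ⟨hdot, hne⟩ := (mem_filter.mp hqS).2
      rwa [← hdot, dot, add_sub_cancel_left]
    have hsub : {q ∈ S | (q.1.1, q.2.1) = b} ⊆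
        {q ∈ box | dot q.1 q.2 = M ∧ (q.1.1, q.2.1) = b} := by
      rw [filter_filter]
      exact monotone_filter_right _ fun q _ h ↦ ⟨h.1.1, h.2⟩
    calc (#{q ∈ S | (q.1.1, q.2.1) = b} : ℝ) ≤ _ := mod_cast
          (card_le_card hsub).trans (card_dot_slice_le_card_hyperbola c c' b A B M)
      _ ≤ C * (A * B) ^ ε := card_hyperbola_le A B hA hB c.2 c'.2 _ hK
  calc (#S : ℝ) ≤ #(intBall c.1 A ×ˢ intBall c'.1 B) * (C * (A * B) ^ ε) :=
        card_le_card_mul_of_forall_fiber_le fst_mem fun b _ ↦ slice_le b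
    _ ≤ 9 * (A * B) * (C * (A * B) ^ ε) := by
        gcongr
        exact card_intBall_product_le c.1 c'.1 hA hB
    _ = 9 * C * (A * B) ^ (1 + ε) := by
        rw [rpow_add (by positivity), rpow_one]
        ring

lemma card_dot_fst_mul_ne_zero_le (c c' : ℤ × ℤ) (A B : ℝ) (M : ℤ) :
    #{q ∈ latticeSquare c A ×ˢ latticeSquare c' B | dot q.1 q.2 = M ∧ q.1.1 * q.2.1 ≠ 0} ≤
      #{q ∈ latticeSquare c.swap A ×ˢ latticeSquare c'.swap B |
        dot q.1 q.2 = M ∧ q.1.2 * q.2.2 ≠ 0} := by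
  refine card_le_card_of_injOn (Prod.map Prod.swap Prod.swap) (fun q hq ↦ ?_)
    (Prod.swap_injective.prodMap Prod.swap_injective).injOn
  simpa [latticeSquare, dot, and_comm, add_comm] using hq

lemma card_fst_mul_eq_zero_snd_mul_eq_zero_le (c c' : ℤ × ℤ) {A B : ℝ} (hA : 1 ≤ A)
    (hB : 1 ≤ B) :
    (#{q ∈ latticeSquare c A ×ˢ latticeSquare c' B |
      q.1 ≠ 0 ∧ q.2 ≠ 0 ∧ q.1.1 * q.2.1 = 0 ∧ q.1.2 * q.2.2 = 0} : ℝ) ≤ 18 * (A * B) := by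
  set horizontal := (intBall c.1 A ×ˢ intBall c'.2 B).image
    fun t : ℤ × ℤ ↦ (((t.1, 0), (0, t.2)) : (ℤ × ℤ) × (ℤ × ℤ))
  set vertical := (intBall c.2 A ×ˢ intBall c'.1 B).image
    fun t : ℤ × ℤ ↦ (((0, t.1), (t.2, 0)) : (ℤ × ℤ) × (ℤ × ℤ))
  have hsub : {q ∈ latticeSquare c A ×ˢ latticeSquare c' B |
      q.1 ≠ 0 ∧ q.2 ≠ 0 ∧ q.1.1 * q.2.1 = 0 ∧ q.1.2 * q.2.2 = 0} ⊆ horizontal ∪ vertical := by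
    rintro ⟨⟨x, y⟩, ⟨z, w⟩⟩ hq
    simp only [mem_filter, mem_product, latticeSquare, ne_eq, Prod.ext_iff, Prod.fst_zero,
      Prod.snd_zero, mul_eq_zero] at hq
    simp only [horizontal, vertical, mem_union, mem_image, mem_product, Prod.exists,
      Prod.mk.injEq]
    grind
  calc _ ≤ (#horizontal + #vertical : ℝ) := mod_cast (card_le_card hsub).trans (card_union_le _ _)
    _ ≤ 9 * (A * B) + 9 * (A * B) :=
        add_le_add
          ((Nat.cast_le.mpr card_image_le).trans (card_intBall_product_le c.1 c'.2 hA hB))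
          ((Nat.cast_le.mpr card_image_le).trans (card_intBall_product_le c.2 c'.1 hA hB))
    _ = 18 * (A * B) := by ring

theorem exists_card_dot_le_rpow {ε : ℝ} (hε : 0 < ε) :
    ∃ C : ℝ, 0 < C ∧ ∀ A B : ℝ, 1 ≤ A → 1 ≤ B → ∀ (c c' : ℤ × ℤ) (M : ℤ),
      (#{q ∈ latticeSquare c A ×ˢ latticeSquare c' B | q.1 ≠ 0 ∧ q.2 ≠ 0 ∧ dot q.1 q.2 = M} : ℝ) ≤
        C * (A * B) ^ (1 + ε) := by
  obtain ⟨C, hC, card_snd_le⟩ := exists_card_dot_snd_mul_ne_zero_le hε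
  refine ⟨C + C + 18, by positivity, fun A B hA hB c c' M ↦ ?_⟩
  set box := latticeSquare c A ×ˢ latticeSquare c' B
  have hsub : {q ∈ box | q.1 ≠ 0 ∧ q.2 ≠ 0 ∧ dot q.1 q.2 = M} ⊆
      {q ∈ box | dot q.1 q.2 = M ∧ q.1.1 * q.2.1 ≠ 0} ∪
        {q ∈ box | dot q.1 q.2 = M ∧ q.1.2 * q.2.2 ≠ 0} ∪
          {q ∈ box | q.1 ≠ 0 ∧ q.2 ≠ 0 ∧ q.1.1 * q.2.1 = 0 ∧ q.1.2 * q.2.2 = 0} := by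
    intro q
    simp only [mem_union, mem_filter]
    tauto
  have one_le_AB : 1 ≤ A * B := one_le_mul_of_one_le_of_one_le hA hB
  have mul_le : A * B ≤ (A * B) ^ (1 + ε) := self_le_rpow_of_one_le one_le_AB (by linarith)
  have card_fst_le : (#{q ∈ box | dot q.1 q.2 = M ∧ q.1.1 * q.2.1 ≠ 0} : ℝ) ≤
      C * (A * B) ^ (1 + ε) :=
    (Nat.cast_le.mpr (card_dot_fst_mul_ne_zero_le c c' A B M)).trans (card_snd_le A B hA hB _ _ M)
  calc _ ≤ (#{q ∈ box | dot q.1 q.2 = M ∧ q.1.1 * q.2.1 ≠ 0} : ℝ) +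
        #{q ∈ box | dot q.1 q.2 = M ∧ q.1.2 * q.2.2 ≠ 0} +
          #{q ∈ box | q.1 ≠ 0 ∧ q.2 ≠ 0 ∧ q.1.1 * q.2.1 = 0 ∧ q.1.2 * q.2.2 = 0} :=
        mod_cast (card_le_card hsub).trans
          ((card_union_le _ _).trans (by gcongr; exact card_union_le _ _))
    _ ≤ C * (A * B) ^ (1 + ε) + C * (A * B) ^ (1 + ε) + 18 * (A * B) ^ (1 + ε) := by
        gcongr
        · exact card_snd_le A B hA hB c c' M
        · exact (card_fst_mul_eq_zero_snd_mul_eq_zero_le c c' hA hB).trans (by gcongr)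
    _ = (C + C + 18) * (A * B) ^ (1 + ε) := by ring

end Bilinear

section Interactions

/-- The triples `(n, n₂, n₃)` of the set `S^{𝐍,(m)}` over a fixed `n₁`, with the dyadic
localizations of `n`, `n₂` and `n₃` replaced by finite sets `Q`, `Q₂` and `Q₃` and that of `n₁`
dropped. -/
def interactions (n₁ : ℤ × ℤ) (m : ℤ) (Q Q₂ Q₃ : Finset (ℤ × ℤ)) :
    Finset ((ℤ × ℤ) × (ℤ × ℤ) × (ℤ × ℤ)) :=
  {t ∈ Q ×ˢ Q₂ ×ˢ Q₃ |
    t.1 = n₁ - t.2.1 + t.2.2 ∧ t.1 ≠ n₁ ∧ t.1 ≠ t.2.2 ∧ phiFn t.1 n₁ t.2.1 t.2.2 = m}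

variable {n n₁ n₂ n₃ : ℤ × ℤ} {m : ℤ} {Q Q₂ Q₃ : Finset (ℤ × ℤ)}

lemma mem_interactions : (n, n₂, n₃) ∈ interactions n₁ m Q Q₂ Q₃ ↔
    (n ∈ Q ∧ n₂ ∈ Q₂ ∧ n₃ ∈ Q₃) ∧ n = n₁ - n₂ + n₃ ∧ n ≠ n₁ ∧ n ≠ n₃ ∧ phiFn n n₁ n₂ n₃ = m := by
  simp only [interactions, mem_filter, mem_product]

lemma phiFn_eq_two_mul_dot (h : n = n₁ - n₂ + n₃) :
    phiFn n n₁ n₂ n₃ = 2 * dot (n - n₁) (n - n₃) := by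
  subst h
  simp only [phiFn, nsq, dot, Prod.fst_sub, Prod.snd_sub, Prod.fst_add, Prod.snd_add]
  ring

-- With `u = n - n₁` and `v = n - n₃`, this is `|u + v|² = 4 u · v + |u - v|²`.
lemma nsq_sub_add_sub (h : n = n₁ - n₂ + n₃) :
    nsq (n - n₁ + (n - n₃)) = 2 * phiFn n n₁ n₂ n₃ + nsq (n₁ - n₃) := by
  rw [phiFn_eq_two_mul_dot h]
  simp only [nsq, dot, Prod.fst_sub, Prod.snd_sub, Prod.fst_add, Prod.snd_add]
  ring

lemma swap_mem_interactions (h : (n, n₂, n₃) ∈ interactions n₁ m Q Q₂ Q₃) :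
    (n₂, n, n₃) ∈ interactions n₁ m Q₂ Q Q₃ := by
  obtain ⟨⟨hn, hn₂, hn₃⟩, hsum, hne₁, hne₃, hphi⟩ := mem_interactions.mp h
  have hsum' : n₂ = n₁ - n + n₃ := by
    rw [hsum]
    abel
  refine mem_interactions.mpr ⟨⟨hn₂, hn, hn₃⟩, hsum', ?_, ?_, ?_⟩
  · rintro rfl
    exact hne₃ (by rw [hsum, sub_self, zero_add])
  · rintro rfl
    exact hne₁ (by rw [hsum, sub_add_cancel])
  · rw [← hphi, phiFn, phiFn]
    ring

lemma card_interactions_swap (n₁ : ℤ × ℤ) (m : ℤ) (Q Q₂ Q₃ : Finset (ℤ × ℤ)) :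
    #(interactions n₁ m Q Q₂ Q₃) = #(interactions n₁ m Q₂ Q Q₃) :=
  card_nbij' (fun t ↦ (t.2.1, t.1, t.2.2)) (fun t ↦ (t.2.1, t.1, t.2.2))
    (fun _ ↦ swap_mem_interactions) (fun _ ↦ swap_mem_interactions) (fun _ _ ↦ rfl) (fun _ _ ↦ rfl)

lemma injOn_interactions : Set.InjOn (fun t : (ℤ × ℤ) × (ℤ × ℤ) × (ℤ × ℤ) ↦ (t.1, t.2.2))
    (interactions n₁ m Q Q₂ Q₃) := by
  rintro ⟨n, n₂, n₃⟩ ht ⟨k, k₂, k₃⟩ hk heq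
  obtain ⟨rfl, rfl⟩ := Prod.mk.inj heq
  have hn₂ := (mem_interactions.mp ht).2.1
  have hk₂ := (mem_interactions.mp hk).2.1
  rw [hn₂, add_left_inj, sub_right_inj] at hk₂
  rw [hk₂]

lemma card_interactions_le_card_dot {S S' : Finset (ℤ × ℤ)}
    (hS : ∀ t ∈ interactions n₁ m Q Q₂ Q₃, t.1 - n₁ ∈ S ∧ t.1 - t.2.2 ∈ S') :
    #(interactions n₁ m Q Q₂ Q₃) ≤
      #{q ∈ S ×ˢ S' | q.1 ≠ 0 ∧ q.2 ≠ 0 ∧ dot q.1 q.2 = m / 2} := by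
  refine card_le_card_of_injOn (fun t ↦ (t.1 - n₁, t.1 - t.2.2)) ?_ fun t ht t' ht' htt' ↦ ?_
  · rintro ⟨n, n₂, n₃⟩ ht
    obtain ⟨-, hsum, hne₁, hne₃, hphi⟩ := mem_interactions.mp (mem_coe.mp ht)
    have hdot : dot (n - n₁) (n - n₃) = m / 2 := by
      rw [phiFn_eq_two_mul_dot hsum] at hphi
      omega
    exact mem_coe.mpr (mem_filter.mpr ⟨mem_product.mpr (hS _ ht),
      sub_ne_zero.mpr hne₁, sub_ne_zero.mpr hne₃, hdot⟩)
  · obtain ⟨h₁, h₃⟩ := Prod.mk.inj htt'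
    have hn : t.1 = t'.1 := sub_left_injective h₁
    rw [hn, sub_right_inj] at h₃
    exact injOn_interactions ht ht' (Prod.ext hn h₃)

lemma card_interactions_slice_le_card_circle (n₁ a b : ℤ × ℤ) (m : ℤ) (N : ℝ)
    (Q₂ Q₃ : Finset (ℤ × ℤ)) :
    #{t ∈ interactions n₁ m (latticeSquare a N) Q₂ Q₃ | t.2.2 = b} ≤
      #{p ∈ latticeSquare (a - n₁ + (a - b)) (N + N) | nsq p = 2 * m + nsq (n₁ - b)} := by
  refine card_le_card_of_injOn (fun t ↦ t.1 - n₁ + (t.1 - b)) ?_ fun t ht t' ht' htt' ↦ ?_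
  · rintro ⟨n, n₂, n₃⟩ ht
    obtain ⟨ht', rfl : n₃ = b⟩ := mem_filter.mp (mem_coe.mp ht)
    obtain ⟨⟨hn, -⟩, hsum, -, -, rfl⟩ := mem_interactions.mp ht'
    exact mem_coe.mpr (mem_filter.mpr
      ⟨add_mem_latticeSquare (sub_const_mem_latticeSquare n₁ hn)
        (sub_const_mem_latticeSquare n₃ hn), nsq_sub_add_sub hsum⟩)
  · obtain ⟨ht, ht₃⟩ := mem_filter.mp (mem_coe.mp ht)
    obtain ⟨ht', ht'₃⟩ := mem_filter.mp (mem_coe.mp ht')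
    have two_nsmul_eq : 2 • t.1 = 2 • t'.1 := by
      simpa only [sub_add_sub_comm, sub_left_inj, ← two_nsmul] using htt'
    exact injOn_interactions ht ht'
      (Prod.ext (nsmul_right_injective two_ne_zero two_nsmul_eq) (ht₃.trans ht'₃.symm))

variable {ε : ℝ}

theorem exists_card_interactions_le_sq_mul_rpow (hε : 0 < ε) :
    ∃ C : ℝ, 0 < C ∧ ∀ N N₃ : ℝ, 1 ≤ N → 1 ≤ N₃ → ∀ (m : ℤ) (n₁ a a₃ : ℤ × ℤ)
      (Q₂ : Finset (ℤ × ℤ)),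
      (#(interactions n₁ m (latticeSquare a N) Q₂ (latticeSquare a₃ N₃)) : ℝ) ≤
        C * (N₃ ^ 2 * N ^ ε) := by
  obtain ⟨C, hC, card_circle_le⟩ := exists_card_circle_le_rpow hε
  refine ⟨9 * (C * 2 ^ ε), by positivity, fun N N₃ hN hN₃ m n₁ a a₃ Q₂ ↦ ?_⟩
  set S := interactions n₁ m (latticeSquare a N) Q₂ (latticeSquare a₃ N₃)
  have slice_le (b : ℤ × ℤ) : (#{t ∈ S | t.2.2 = b} : ℝ) ≤ C * (N + N) ^ ε :=
    (Nat.cast_le.mpr (card_interactions_slice_le_card_circle n₁ a b m N Q₂ _)).trans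
      (card_circle_le (N + N) (by linarith) _ _)
  calc (#S : ℝ) ≤ #(latticeSquare a₃ N₃) * (C * (N + N) ^ ε) :=
        card_le_card_mul_of_forall_fiber_le (fun t ht ↦ (mem_interactions.mp ht).1.2.2)
          fun b _ ↦ slice_le b
    _ ≤ 9 * (N₃ * N₃) * (C * (N + N) ^ ε) := by
        gcongr
        exact card_intBall_product_le a₃.1 a₃.2 hN₃ hN₃
    _ = 9 * (C * 2 ^ ε) * (N₃ ^ 2 * N ^ ε) := by
        rw [← two_mul, mul_rpow two_pos.le (by positivity)]
        ring

theorem exists_card_interactions_le_rpow_first_second (hε : 0 < ε) :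
    ∃ C : ℝ, 0 < C ∧ ∀ N N₂ : ℝ, 1 ≤ N → 1 ≤ N₂ → ∀ (m : ℤ) (n₁ a a₂ : ℤ × ℤ)
      (Q₃ : Finset (ℤ × ℤ)),
      (#(interactions n₁ m (latticeSquare a N) (latticeSquare a₂ N₂) Q₃) : ℝ) ≤
        C * (N * N₂) ^ (1 + ε) := by
  obtain ⟨C, hC, card_dot_le⟩ := exists_card_dot_le_rpow hε
  refine ⟨C, hC, fun N N₂ hN hN₂ m n₁ a a₂ Q₃ ↦ le_trans (Nat.cast_le.mpr ?_)
    (card_dot_le N N₂ hN hN₂ (a - n₁) (n₁ - a₂) (m / 2))⟩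
  refine card_interactions_le_card_dot fun ⟨n, n₂, n₃⟩ ht ↦ ?_
  obtain ⟨⟨hn, hn₂, -⟩, hsum, -⟩ := mem_interactions.mp ht
  refine ⟨sub_const_mem_latticeSquare n₁ hn, ?_⟩
  rw [sub_eq_of_eq_add hsum]
  exact const_sub_mem_latticeSquare n₁ hn₂

-- If `N₃ ≤ N` this follows from the circle bound, otherwise `n - n₃` has size at most `2 N₃`.
theorem exists_card_interactions_le_rpow_first_third (hε : 0 < ε) :
    ∃ C : ℝ, 0 < C ∧ ∀ N N₃ : ℝ, 1 ≤ N → 1 ≤ N₃ → ∀ (m : ℤ) (n₁ a a₃ : ℤ × ℤ)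
      (Q₂ : Finset (ℤ × ℤ)),
      (#(interactions n₁ m (latticeSquare a N) Q₂ (latticeSquare a₃ N₃)) : ℝ) ≤
        C * (N * N₃) ^ (1 + ε) := by
  obtain ⟨C, hC, card_dot_le⟩ := exists_card_dot_le_rpow hε
  obtain ⟨C', hC', card_le_sq⟩ := exists_card_interactions_le_sq_mul_rpow hε
  refine ⟨max C' (C * 2 ^ (1 + ε)), by positivity, fun N N₃ hN hN₃ m n₁ a a₃ Q₂ ↦ ?_⟩
  rcases le_total N₃ N with hle | hle
  · calc _ ≤ C' * (N₃ ^ 2 * N ^ ε) := card_le_sq N N₃ hN hN₃ m n₁ a a₃ Q₂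
      _ ≤ C' * (N * N₃ * (N * N₃) ^ ε) := by
        gcongr
        · rw [sq]
          gcongr
        · exact le_mul_of_one_le_right (by positivity) hN₃
      _ = C' * (N * N₃) ^ (1 + ε) := by rw [rpow_add (by positivity), rpow_one]
      _ ≤ _ := by
        gcongr
        exact le_max_left _ _
  · calc _ ≤ C * (N * (N + N₃)) ^ (1 + ε) := by
          refine le_trans (Nat.cast_le.mpr ?_)
            (card_dot_le N (N + N₃) hN (by linarith) (a - n₁) (a - a₃) (m / 2))
          refine card_interactions_le_card_dot fun ⟨n, n₂, n₃⟩ ht ↦ ?_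
          obtain ⟨⟨hn, -, hn₃⟩, -⟩ := mem_interactions.mp ht
          exact ⟨sub_const_mem_latticeSquare n₁ hn, sub_mem_latticeSquare hn hn₃⟩
      _ ≤ C * (N * (N₃ + N₃)) ^ (1 + ε) := by gcongr
      _ = C * 2 ^ (1 + ε) * (N * N₃) ^ (1 + ε) := by
        rw [← two_mul, mul_left_comm, mul_rpow two_pos.le (by positivity), mul_assoc]
      _ ≤ _ := by
        gcongr
        exact le_max_right _ _

lemma IsDyadic.one_le {N : ℝ} (hN : IsDyadic N) : 1 ≤ N := by
  obtain ⟨k, rfl⟩ := hN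
  exact one_le_pow₀ one_le_two

lemma simDyadic.mem_latticeSquare_zero {N : ℝ} {n : ℤ × ℤ} (hn : simDyadic N n) :
    n ∈ latticeSquare 0 N := by
  have znorm_le : znorm n ≤ N := by
    rcases hn with ⟨rfl, h⟩ | ⟨-, -, h⟩ <;> exact h
  simp only [mem_latticeSquare, Prod.fst_zero, Prod.snd_zero, Int.cast_zero, sub_zero]
  exact ⟨(abs_le_sqrt (le_add_of_nonneg_right (sq_nonneg _))).trans znorm_le,
    (abs_le_sqrt (le_add_of_nonneg_left (sq_nonneg _))).trans znorm_le⟩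

lemma ncard_setOf_SMem_le (N N₁ N₂ N₃ : ℝ) (m : ℤ) (n₁ : ℤ × ℤ) :
    {t : (ℤ × ℤ) × (ℤ × ℤ) × (ℤ × ℤ) | SMem N N₁ N₂ N₃ m t.1 n₁ t.2.1 t.2.2}.ncard ≤
      #(interactions n₁ m (latticeSquare 0 N) (latticeSquare 0 N₂) (latticeSquare 0 N₃)) := by
  rw [← Set.ncard_coe_finset]
  refine Set.ncard_le_ncard (fun t ht ↦ ?_) (finite_toSet _)
  obtain ⟨hsum, hne₁, hne₃, hphi, hn, -, hn₂, hn₃⟩ := ht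
  exact mem_coe.mpr (mem_interactions.mpr ⟨⟨hn.mem_latticeSquare_zero,
    hn₂.mem_latticeSquare_zero, hn₃.mem_latticeSquare_zero⟩, hsum, hne₁, hne₃, hphi⟩)

end Interactions

theorem stmt6_general {ε : ℝ} (hε : 0 < ε) :
    ∃ C : ℝ, 0 < C ∧ ∀ N N₂ N₃ : ℝ, 1 ≤ N → 1 ≤ N₂ → 1 ≤ N₃ → ∀ (m : ℤ) (n₁ a a₂ a₃ : ℤ × ℤ),
      (#(interactions n₁ m (latticeSquare a N) (latticeSquare a₂ N₂) (latticeSquare a₃ N₃)) : ℝ) ≤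
        C * min (min (N₃ ^ 2 * (min N N₂) ^ ε) ((N * N₂) ^ (1 + ε)))
          (min ((N * N₃) ^ (1 + ε)) ((N₂ * N₃) ^ (1 + ε))) := by
  obtain ⟨C₁, hC₁, le_sq⟩ := exists_card_interactions_le_sq_mul_rpow hε
  obtain ⟨C₂, hC₂, le_first_second⟩ := exists_card_interactions_le_rpow_first_second hε
  obtain ⟨C₃, hC₃, le_first_third⟩ := exists_card_interactions_le_rpow_first_third hε
  refine ⟨C₁ + C₂ + C₃, by positivity, fun N N₂ N₃ hN hN₂ hN₃ m n₁ a a₂ a₃ ↦ ?_⟩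
  set T := interactions n₁ m (latticeSquare a N) (latticeSquare a₂ N₂) (latticeSquare a₃ N₃)
  have swap_eq : #T = #(interactions n₁ m (latticeSquare a₂ N₂) (latticeSquare a N) _) :=
    card_interactions_swap ..
  have le_sq_min : (#T : ℝ) ≤ C₁ * (N₃ ^ 2 * (min N N₂) ^ ε) := by
    rcases min_choice N N₂ with hmin | hmin <;> rw [hmin]
    · exact le_sq N N₃ hN hN₃ m n₁ a a₃ _
    · exact swap_eq ▸ le_sq N₂ N₃ hN₂ hN₃ m n₁ a₂ a₃ _
  have le_mul_two : (#T : ℝ) ≤ C₂ * (N * N₂) ^ (1 + ε) := le_first_second N N₂ hN hN₂ m n₁ a a₂ _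
  have le_mul_three : (#T : ℝ) ≤ C₃ * (N * N₃) ^ (1 + ε) := le_first_third N N₃ hN hN₃ m n₁ a a₃ _
  have le_two_mul_three : (#T : ℝ) ≤ C₃ * (N₂ * N₃) ^ (1 + ε) :=
    swap_eq ▸ le_first_third N₂ N₃ hN₂ hN₃ m n₁ a₂ a₃ _
  simp only [mul_min_of_nonneg _ _ (by positivity : 0 ≤ C₁ + C₂ + C₃), le_min_iff]
  refine ⟨⟨le_sq_min.trans ?_, le_mul_two.trans ?_⟩, le_mul_three.trans ?_,
    le_two_mul_three.trans ?_⟩ <;> gcongr <;> linarith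

theorem stmt6 (ε : ℝ) (hε : 0 < ε) :
    ∃ C : ℝ, 0 < C ∧ ∀ N N₁ N₂ N₃ : ℝ,
      IsDyadic N → IsDyadic N₁ → IsDyadic N₂ → IsDyadic N₃ → ∀ m : ℤ, ∀ n₁ : ℤ × ℤ,
      (({t : (ℤ × ℤ) × (ℤ × ℤ) × (ℤ × ℤ) |
          SMem N N₁ N₂ N₃ m t.1 n₁ t.2.1 t.2.2}).ncard : ℝ) ≤
        C * min (min (N₃ ^ 2 * (min N N₂) ^ ε) ((N * N₂) ^ (1 + ε)))
                (min ((N * N₃) ^ (1 + ε)) ((N₂ * N₃) ^ (1 + ε))) := by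
  obtain ⟨C, hC, card_le⟩ := stmt6_general hε
  exact ⟨C, hC, fun N N₁ N₂ N₃ hN _ hN₂ hN₃ m n₁ ↦
    (Nat.cast_le.mpr (ncard_setOf_SMem_le N N₁ N₂ N₃ m n₁)).trans
      (card_le N N₂ N₃ hN.one_le hN₂.one_le hN₃.one_le m n₁ 0 0 0)⟩
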